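/- arXiv:math/0504496 — 3 statements merged into one kernel-verified Lean document; each statement's English description precedes it below -/
import Mathlib

section
/- Let κ ∈ (0,4], set α = 2(4−κ)/κ, and define f : [0,π] → ℝ by f(θ) = (∫_θ^π (sin u)^α du) / (∫_0^π (sin u)^α du). Then f is continuous on [0,π] and twice continuously differentiable on (0,π), it satisfies f(0) = 1, f(π) = 0, and for all θ ∈ (0,π) it satisfies the differential equation (κ/2)·sin²(θ)·f''(θ) + ((κ−4)/2)·sin(2θ)·f'(θ) = 0. Moreover f is the unique function with these properties: if g : [0,π] → ℝ is continuous, twice continuously differentiable on (0,π), satisfies the same differential equation on (0,π), and g(0) = 1, g(π) = 0, then g = f. -/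
open Real Set

/-- The boundary value problem characterizing the probability that a point at
angle `θ` lies to the right of a chordal `SLE_κ` trace (`0 < κ ≤ 4`):
`f(θ) = (∫_θ^π sin^α u du) / (∫_0^π sin^α u du)` with `α = 2(4-κ)/κ` is
continuous on `[0,π]`, `C²` on `(0,π)`, satisfies `f(0) = 1`, `f(π) = 0` and
`(κ/2) sin²θ f''(θ) + ((κ-4)/2) sin(2θ) f'(θ) = 0` on `(0,π)`, and it is the
unique such function. -/
theorem sle_right_passage_bvp (κ : ℝ) (hκ0 : 0 < κ) (hκ4 : κ ≤ 4)
    (α : ℝ) (hα : α = 2 * (4 - κ) / κ)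
    (f : ℝ → ℝ)
    (hf : ∀ θ : ℝ,
      f θ = (∫ u in θ..π, Real.sin u ^ α) / (∫ u in (0 : ℝ)..π, Real.sin u ^ α)) :
    ContinuousOn f (Icc 0 π) ∧
    ContDiffOn ℝ 2 f (Ioo 0 π) ∧
    f 0 = 1 ∧ f π = 0 ∧
    (∀ θ ∈ Ioo (0 : ℝ) π,
      κ / 2 * Real.sin θ ^ 2 * deriv (deriv f) θ
        + (κ - 4) / 2 * Real.sin (2 * θ) * deriv f θ = 0) ∧
    (∀ g : ℝ → ℝ, ContinuousOn g (Icc 0 π) → ContDiffOn ℝ 2 g (Ioo 0 π) →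
      (∀ θ ∈ Ioo (0 : ℝ) π,
        κ / 2 * Real.sin θ ^ 2 * deriv (deriv g) θ
          + (κ - 4) / 2 * Real.sin (2 * θ) * deriv g θ = 0) →
      g 0 = 1 → g π = 0 → EqOn g f (Icc 0 π)) := by
  have hα0 : 0 ≤ α := by
    rw [hα]; apply div_nonneg <;> linarith
  have hακ : α * κ = 2 * (4 - κ) := by rw [hα]; field_simp
  have hc : Continuous (fun u : ℝ => Real.sin u ^ α) :=
    Real.continuous_sin.rpow_const (fun _ => Or.inr hα0)
  have hpos : ∀ θ ∈ Ioo (0 : ℝ) π, 0 < Real.sin θ := fun θ hθ => Real.sin_pos_of_mem_Ioo hθ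
  have hC : 0 < ∫ u in (0 : ℝ)..π, Real.sin u ^ α :=
    intervalIntegral.intervalIntegral_pos_of_pos_on (hc.intervalIntegrable _ _)
      (fun x hx => Real.rpow_pos_of_pos (hpos x hx) _) Real.pi_pos
  set C := ∫ u in (0 : ℝ)..π, Real.sin u ^ α with hCdef
  have hd : ∀ θ, HasDerivAt f (-(Real.sin θ ^ α) / C) θ := by
    intro θ
    have h1 := (intervalIntegral.integral_hasDerivAt_left (hc.intervalIntegrable θ π)
      hc.aestronglyMeasurable.stronglyMeasurableAtFilter hc.continuousAt).div_const C
    exact h1.congr_of_eventuallyEq (Filter.Eventually.of_forall hf)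
  have hdf : deriv f = fun θ => -(Real.sin θ ^ α) / C := funext fun θ => (hd θ).deriv
  have hcont : Continuous f := continuous_iff_continuousAt.2 fun θ => (hd θ).continuousAt
  have hf0 : f 0 = 1 := by rw [hf]; exact div_self hC.ne'
  have hfpi : f π = 0 := by rw [hf]; simp
  refine ⟨hcont.continuousOn, ?_, hf0, hfpi, ?_, ?_⟩
  · rw [show (2 : WithTop ℕ∞) = 1 + 1 by norm_num, contDiffOn_succ_iff_deriv_of_isOpen isOpen_Ioo]
    refine ⟨fun θ _ => (hd θ).differentiableAt.differentiableWithinAt, by simp, ?_⟩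
    rw [hdf]
    refine ContDiffOn.div_const (ContDiffOn.neg ?_) C
    exact Real.contDiff_sin.contDiffOn.rpow_const_of_ne (fun x hx => (hpos x hx).ne')
  · intro θ hθ
    have hs := hpos θ hθ
    have h2 : HasDerivAt (deriv f) (-(Real.cos θ * α * Real.sin θ ^ (α - 1)) / C) θ := by
      rw [hdf]
      exact (((Real.hasDerivAt_sin θ).rpow_const (Or.inl hs.ne')).neg).div_const C
    rw [h2.deriv, (hd θ).deriv, Real.sin_two_mul, Real.rpow_sub_one hs.ne']
    field_simp
    linear_combination (-(Real.sin θ * Real.cos θ * Real.sin θ ^ α)) * hακ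
  · intro g hgc hg2 hode hg0 hgpi
    rw [show (2 : WithTop ℕ∞) = 1 + 1 by norm_num,
      contDiffOn_succ_iff_deriv_of_isOpen isOpen_Ioo] at hg2
    obtain ⟨hg1, -, hg2⟩ := hg2
    have hgd : ∀ θ ∈ Ioo (0 : ℝ) π, HasDerivAt g (deriv g θ) θ := fun θ hθ =>
      (hg1.differentiableAt (isOpen_Ioo.mem_nhds hθ)).hasDerivAt
    have hgdd : ∀ θ ∈ Ioo (0 : ℝ) π, HasDerivAt (deriv g) (deriv (deriv g) θ) θ := fun θ hθ =>
      ((hg2.differentiableOn (by norm_num)).differentiableAt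
        (isOpen_Ioo.mem_nhds hθ)).hasDerivAt
    have hq : ∀ θ ∈ Ioo (0 : ℝ) π,
        HasDerivAt (fun t => deriv g t * Real.sin t ^ (-α)) 0 θ := by
      intro θ hθ
      have hs := hpos θ hθ
      have h := (hgdd θ hθ).mul ((Real.hasDerivAt_sin θ).rpow_const (p := -α) (Or.inl hs.ne'))
      refine h.congr_deriv ?_
      have ho := hode θ hθ
      rw [Real.sin_two_mul] at ho
      have hk : Real.sin θ * deriv (deriv g) θ = α * Real.cos θ * deriv g θ := by
        have : κ * Real.sin θ ≠ 0 := by positivity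
        apply mul_left_cancel₀ this
        linear_combination 2 * ho - Real.sin θ * Real.cos θ * deriv g θ * hακ
      rw [Real.rpow_sub_one hs.ne']
      field_simp
      linear_combination Real.sin θ ^ (-α) * hk
    obtain ⟨c, hcc⟩ := isOpen_Ioo.exists_is_const_of_deriv_eq_zero isPreconnected_Ioo
      (fun θ hθ => (hq θ hθ).differentiableAt.differentiableWithinAt)
      (fun θ hθ => (hq θ hθ).deriv)
    have hg' : ∀ θ ∈ Ioo (0 : ℝ) π, deriv g θ = c * Real.sin θ ^ α := by
      intro θ hθ
      have h := hcc θ hθ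
      have hs := hpos θ hθ
      have hs' := Real.rpow_pos_of_pos hs α
      simp only [Real.rpow_neg hs.le] at h
      rw [← h]
      field_simp
    have hH : ∀ x ∈ Icc (0 : ℝ) π, g x + c * C * f x = 1 + c * C := by
      intro x hx
      rcases hx.1.eq_or_lt with h0 | h0
      · rw [← h0, hg0, hf0, mul_one]
      · obtain ⟨t, ht, hte⟩ := exists_hasDerivAt_eq_slope (fun x => g x + c * C * f x)
          (fun _ => 0) h0
          ((hgc.mono (Icc_subset_Icc_right hx.2)).add
            (continuousOn_const.mul hcont.continuousOn)) (by
            intro t ht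
            have htt : t ∈ Ioo (0 : ℝ) π := ⟨ht.1, ht.2.trans_le hx.2⟩
            refine ((hgd t htt).add ((hd t).const_mul (c * C))).congr_deriv ?_
            rw [hg' t htt]
            field_simp
            ring)
        rw [hg0, hf0, eq_div_iff (by linarith)] at hte
        linarith
    have hcC : c * C = -1 := by
      have := hH π ⟨Real.pi_pos.le, le_rfl⟩
      rw [hgpi, hfpi] at this
      linarith
    intro x hx
    have := hH x hx
    rw [hcC] at this
    linarith
end

section
/- For every real number x > 1, the integral over t ∈ (−∞, ∞) of (1/(1 + cosh(t)))·[(x−1)/(t² + (x−1)²π²) − (x+1)/(t² + (x+1)²π²)] dt equals 4/(π²·x²). -/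
open Real

open MeasureTheory Set

lemma aux_sig (t : ℝ) : 1 / (1 + Real.cosh t) = 2 * (sigmoid t * (1 - sigmoid t)) := by
  rw [← sigmoid_neg, sigmoid_def, sigmoid_def, neg_neg, Real.cosh_eq]
  have h := Real.exp_pos t
  rw [Real.exp_neg]
  field_simp
  ring

lemma aux_int : Integrable (fun t : ℝ => 1 / (1 + Real.cosh t)) := by
  have h := (integrableOn_image_iff_integrableOn_abs_deriv_smul (s := univ) (f := sigmoid)
    (f' := fun t => sigmoid t * (1 - sigmoid t)) MeasurableSet.univ
    (fun t _ => (hasDerivAt_sigmoid t).hasDerivWithinAt) sigmoid_injective.injOn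
    (fun _ => (2 : ℝ))).1 (by
      rw [image_univ, range_sigmoid]
      exact integrableOn_const (by simp))
  rw [integrableOn_univ] at h
  refine h.congr (Filter.Eventually.of_forall fun t => ?_)
  have h1 := sigmoid_pos t
  have h2 := sigmoid_lt_one t
  simp only [smul_eq_mul]
  rw [aux_sig, abs_of_pos (mul_pos h1 (by linarith))]
  ring

lemma aux_pow (s t : ℝ) : ((sigmoid t : ℝ) : ℂ) ^ (1 + s * Complex.I - 1) *
    (1 - ((sigmoid t : ℝ) : ℂ)) ^ (1 - s * Complex.I - 1) = Complex.exp (s * t * Complex.I) := by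
  have h1 := sigmoid_pos t
  have h2 := sigmoid_pos (-t)
  have e : (1 - ((sigmoid t : ℝ) : ℂ)) = ((sigmoid (-t) : ℝ) : ℂ) := by
    rw [sigmoid_neg]; push_cast; ring
  have hl : Real.log (sigmoid (-t)) = Real.log (sigmoid t) - t := by
    rw [← sigmoid_mul_rexp_neg, Real.log_mul h1.ne' (Real.exp_pos _).ne', Real.log_exp]; ring
  rw [e, Complex.cpow_def_of_ne_zero (by exact_mod_cast h1.ne'),
    Complex.cpow_def_of_ne_zero (by exact_mod_cast h2.ne'), ← Complex.ofReal_log h1.le,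
    ← Complex.ofReal_log h2.le, hl, ← Complex.exp_add]
  congr 1
  push_cast
  ring

lemma aux_beta (s : ℝ) (hs : 0 < s) :
    Complex.betaIntegral (1 + s * Complex.I) (1 - s * Complex.I)
      = ((π * s / Real.sinh (π * s) : ℝ) : ℂ) := by
  have h := Complex.Gamma_mul_Gamma_eq_betaIntegral (s := 1 + s * Complex.I)
    (t := 1 - s * Complex.I) (by simp) (by simp)
  have h2 : (1 + s * Complex.I + (1 - s * Complex.I) : ℂ) = 2 := by ring
  have hne : (s * Complex.I : ℂ) ≠ 0 := by simp [hs.ne']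
  have hS : Real.sinh (π * s) ≠ 0 := (Real.sinh_pos_iff.2 (by positivity)).ne'
  have hS' : Complex.sinh (π * s) ≠ 0 := by exact_mod_cast hS
  have h3 : Complex.Gamma 2 = 1 := by simpa using Complex.Gamma_nat_eq_factorial 1
  rw [h2, h3, one_mul, add_comm, Complex.Gamma_add_one _ hne, mul_assoc,
    Complex.Gamma_mul_Gamma_one_sub, ← mul_assoc, Complex.sin_mul_I] at h
  rw [add_comm, ← h]
  push_cast
  field_simp

lemma aux_fourier (s : ℝ) (hs : 0 < s) :
    ∫ t : ℝ, 1 / (1 + Real.cosh t) * Real.cos (t * s) = 2 * (π * s / Real.sinh (π * s)) := by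
  have h := integral_image_eq_integral_abs_deriv_smul (s := univ) (f := sigmoid)
    (f' := fun t => sigmoid t * (1 - sigmoid t)) MeasurableSet.univ
    (fun t _ => (hasDerivAt_sigmoid t).hasDerivWithinAt) sigmoid_injective.injOn
    (fun u : ℝ => (u : ℂ) ^ (1 + s * Complex.I - 1) * (1 - (u : ℂ)) ^ (1 - s * Complex.I - 1))
  rw [image_univ, range_sigmoid, ← integral_Ioc_eq_integral_Ioo,
    ← intervalIntegral.integral_of_le zero_le_one] at h
  change Complex.betaIntegral _ _ = _ at h
  rw [aux_beta s hs, setIntegral_univ] at h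
  have hI : Integrable (fun t : ℝ => ((1 / (1 + Real.cosh t) : ℝ) : ℂ) *
      Complex.exp (s * t * Complex.I)) := by
    refine aux_int.ofReal.mul_bdd (c := 1) (by fun_prop) (Filter.Eventually.of_forall fun t => ?_)
    rw [← Complex.ofReal_mul, Complex.norm_exp_ofReal_mul_I]
  have h4 : ∫ t : ℝ, ((1 / (1 + Real.cosh t) : ℝ) : ℂ) * Complex.exp (s * t * Complex.I)
      = ((2 * (π * s / Real.sinh (π * s)) : ℝ) : ℂ) := by
    rw [Complex.ofReal_mul, h, ← integral_const_mul]
    congr 1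
    ext t
    have h1 := sigmoid_pos t
    have h2 := sigmoid_lt_one t
    rw [aux_pow, aux_sig, abs_of_pos (mul_pos h1 (by linarith)), Complex.real_smul]
    push_cast
    ring
  have h5 := congrArg Complex.re h4
  rw [Complex.ofReal_re] at h5
  rw [← h5]
  have h6 := integral_re hI
  simp only [RCLike.re_to_complex] at h6
  rw [← h6]
  congr 1
  ext t
  rw [Complex.re_ofReal_mul, ← Complex.ofReal_mul, Complex.exp_ofReal_mul_I_re, mul_comm s t]

lemma aux_laplace (a t : ℝ) (ha : 0 < a) :
    IntegrableOn (fun s : ℝ => Real.exp (-(a * s)) * Real.cos (t * s)) (Ioi 0) ∧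
    ∫ s in Ioi (0:ℝ), Real.exp (-(a * s)) * Real.cos (t * s) = a / (t ^ 2 + a ^ 2) := by
  have hre : ((-a : ℝ) + t * Complex.I : ℂ).re < 0 := by simp [ha]
  have hi := integrableOn_exp_mul_complex_Ioi hre 0
  have hv := integral_exp_mul_complex_Ioi hre 0
  have e : ∀ s : ℝ, (Complex.exp (((-a : ℝ) + t * Complex.I : ℂ) * s)).re
      = Real.exp (-(a * s)) * Real.cos (t * s) := by
    intro s
    rw [Complex.exp_re]
    simp
  constructor
  · have := hi.re
    simp only [RCLike.re_to_complex, e] at this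
    exact this
  · have h6 := integral_re hi
    simp only [RCLike.re_to_complex, e] at h6
    rw [h6, hv]
    simp [Complex.div_re, Complex.normSq_apply]
    field_simp
    ring

theorem aux_exp (a : ℝ) (ha : 0 < a) : IntegrableOn (fun s : ℝ => Real.exp (-(a * s))) (Ioi 0) := by
  simpa using (aux_laplace a 0 ha).1

/-- For `x > 1`,
`∫_ℝ (1/(1+cosh t)) [ (x-1)/(t² + (x-1)²π²) - (x+1)/(t² + (x+1)²π²) ] dt = 4/(π² x²)`. -/
theorem integral_cosh_winding (x : ℝ) (hx : 1 < x) :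
    ∫ t : ℝ, (1 / (1 + Real.cosh t)) *
        ((x - 1) / (t ^ 2 + (x - 1) ^ 2 * π ^ 2) - (x + 1) / (t ^ 2 + (x + 1) ^ 2 * π ^ 2))
      = 4 / (π ^ 2 * x ^ 2) := by
  have hπ := Real.pi_pos
  have ha : 0 < (x - 1) * π := mul_pos (by linarith) hπ
  have hb : 0 < (x + 1) * π := mul_pos (by linarith) hπ
  set D : ℝ → ℝ := fun s => Real.exp (-((x - 1) * π * s)) - Real.exp (-((x + 1) * π * s)) with hD
  have hDi : IntegrableOn D (Ioi 0) := (aux_exp _ ha).sub (aux_exp _ hb)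
  have hint : Integrable (Function.uncurry fun t s : ℝ =>
      1 / (1 + Real.cosh t) * D s * Real.cos (t * s))
      (volume.prod (volume.restrict (Ioi 0))) := by
    refine (aux_int.mul_prod hDi).mul_bdd (c := 1) (g := fun z : ℝ × ℝ => Real.cos (z.1 * z.2))
      (by fun_prop) (Filter.Eventually.of_forall fun z => ?_)
    exact Real.abs_cos_le_one _
  have hswap := integral_integral_swap hint
  have e1 : ∀ t : ℝ, ∫ s in Ioi (0:ℝ), 1 / (1 + Real.cosh t) * D s * Real.cos (t * s)
      = π * ((1 / (1 + Real.cosh t)) *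
        ((x - 1) / (t ^ 2 + (x - 1) ^ 2 * π ^ 2) - (x + 1) / (t ^ 2 + (x + 1) ^ 2 * π ^ 2))) := by
    intro t
    have h1 := aux_laplace _ t ha
    have h2 := aux_laplace _ t hb
    have h3 := integral_sub h1.1 h2.1
    rw [h1.2, h2.2] at h3
    simp_rw [mul_assoc (1 / (1 + Real.cosh t))]
    rw [integral_const_mul]
    have h8 : ∀ s, D s * Real.cos (t * s) = Real.exp (-((x - 1) * π * s)) * Real.cos (t * s)
        - Real.exp (-((x + 1) * π * s)) * Real.cos (t * s) := fun s => sub_mul _ _ _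
    simp only [h8]
    rw [h3]
    simp only [mul_pow]
    ring
  have e2 : ∫ s in Ioi (0:ℝ), ∫ t : ℝ, 1 / (1 + Real.cosh t) * D s * Real.cos (t * s)
      = ∫ s in Ioi (0:ℝ), 4 * π * (s ^ ((2:ℝ) - 1) * Real.exp (-(x * π * s))) := by
    refine setIntegral_congr_fun measurableSet_Ioi fun s hs => ?_
    have hs' : 0 < s := hs
    have hS : Real.sinh (π * s) ≠ 0 := (Real.sinh_pos_iff.2 (by positivity)).ne'
    have hDs : D s = 2 * Real.exp (-(x * π * s)) * Real.sinh (π * s) := by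
      rw [hD, Real.sinh_eq]
      simp only
      rw [show -((x - 1) * π * s) = -(x * π * s) + π * s by ring,
        show -((x + 1) * π * s) = -(x * π * s) + -(π * s) by ring, Real.exp_add, Real.exp_add]
      ring
    have h7 : ∀ t : ℝ, 1 / (1 + Real.cosh t) * D s * Real.cos (t * s)
        = D s * (1 / (1 + Real.cosh t) * Real.cos (t * s)) := fun t => by ring
    simp only [h7]
    rw [integral_const_mul, aux_fourier s hs', hDs, show (2:ℝ) - 1 = 1 by norm_num, Real.rpow_one]
    field_simp
    ring
  simp only [e1] at hswap
  rw [e2, integral_const_mul, integral_const_mul,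
    Real.integral_rpow_mul_exp_neg_mul_Ioi (by norm_num) (by positivity : 0 < x * π),
    Real.Gamma_two, Real.rpow_two] at hswap
  have hx0 : x ≠ 0 := by linarith
  refine mul_left_cancel₀ hπ.ne' (hswap.trans ?_)
  field_simp
end

section
/- For every real number x > 1 that is not an even integer, Σ_{k=1}^∞ [ (2k−1)(x−1)/(((x−1)² − (2k−1)²)²) − (2k−1)(x+1)/(((x+1)² − (2k−1)²)²) ] = −1/(2x²). -/
theorem aux_summable (a : ℝ) : Summable (fun k : ℕ => 1 / (2 * (k : ℝ) + a) ^ 2) := by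
  have h := (Real.summable_one_div_nat_add_rpow (a / 2) 2).2 (by norm_num)
  refine (h.mul_left (1 / 4)).congr ?_
  intro k
  have e : 2 * (k : ℝ) + a = 2 * (k + a / 2) := by ring
  rw [Real.rpow_two, sq_abs, e, mul_pow, one_div_mul_one_div]
  norm_num

/-- For `x > 1` not an even integer,
`Σ_{k=1}^∞ [ (2k-1)(x-1)/((x-1)² - (2k-1)²)² - (2k-1)(x+1)/((x+1)² - (2k-1)²)² ] = -1/(2x²)`,
where the sum over `k ≥ 1` is written as a sum over `k : ℕ` via `k ↦ k + 1`
(so that `2k - 1` becomes `2k + 1`). -/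
theorem telescoping_series_identity (x : ℝ) (hx : 1 < x)
    (hxeven : ∀ m : ℤ, x ≠ 2 * m) :
    ∑' k : ℕ,
        ((2 * (k : ℝ) + 1) * (x - 1) / ((x - 1) ^ 2 - (2 * (k : ℝ) + 1) ^ 2) ^ 2
          - (2 * (k : ℝ) + 1) * (x + 1) / ((x + 1) ^ 2 - (2 * (k : ℝ) + 1) ^ 2) ^ 2)
      = -1 / (2 * x ^ 2) := by
  have hg : Summable (fun k : ℕ => 1 / 4 * (1 / (2 * (k : ℝ) + -x) ^ 2 + 1 / (2 * (k : ℝ) + x) ^ 2)) :=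
    ((aux_summable (-x)).add (aux_summable x)).mul_left _
  set g : ℕ → ℝ := fun k => 1 / 4 * (1 / (2 * (k : ℝ) + -x) ^ 2 + 1 / (2 * (k : ℝ) + x) ^ 2) with hgdef
  have hg1 : Summable (fun k => g (k + 1)) := (summable_nat_add_iff 1).2 hg
  have key : ∀ k : ℕ, ((2 * (k : ℝ) + 1) * (x - 1) / ((x - 1) ^ 2 - (2 * (k : ℝ) + 1) ^ 2) ^ 2
          - (2 * (k : ℝ) + 1) * (x + 1) / ((x + 1) ^ 2 - (2 * (k : ℝ) + 1) ^ 2) ^ 2)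
      = g (k + 1) - g k := by
    intro k
    have hk : (0 : ℝ) ≤ k := Nat.cast_nonneg k
    have part : ∀ a m : ℝ, a - m ≠ 0 → a + m ≠ 0 →
        m * a / (a ^ 2 - m ^ 2) ^ 2 = 1 / 4 * (1 / (a - m) ^ 2 - 1 / (a + m) ^ 2) := by
      intro a m h1 h2
      have e : a ^ 2 - m ^ 2 = (a - m) * (a + m) := by ring
      rw [e]
      field_simp
      ring
    have n1 : x - 1 - (2 * (k : ℝ) + 1) ≠ 0 := by
      intro h
      apply hxeven (k + 1)
      push_cast
      linarith
    have n2 : x + 1 - (2 * (k : ℝ) + 1) ≠ 0 := by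
      intro h
      apply hxeven k
      push_cast
      linarith
    have n3 : x - 1 + (2 * (k : ℝ) + 1) ≠ 0 := by
      intro h
      linarith
    have n4 : x + 1 + (2 * (k : ℝ) + 1) ≠ 0 := by
      intro h
      linarith
    rw [part _ _ n1 n3, part _ _ n2 n4]
    simp only [hgdef]
    push_cast
    have e1 : (x - 1 - (2 * (k : ℝ) + 1)) ^ 2 = (2 * ((k : ℝ) + 1) + -x) ^ 2 := by ring
    have e2 : (x + 1 - (2 * (k : ℝ) + 1)) ^ 2 = (2 * (k : ℝ) + -x) ^ 2 := by ring
    have e3 : (x - 1 + (2 * (k : ℝ) + 1)) ^ 2 = (2 * (k : ℝ) + x) ^ 2 := by ring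
    have e4 : (x + 1 + (2 * (k : ℝ) + 1)) ^ 2 = (2 * ((k : ℝ) + 1) + x) ^ 2 := by ring
    rw [e1, e2, e3, e4]
    ring
  rw [tsum_congr key, hg1.tsum_sub hg, hg.tsum_eq_zero_add]
  have h0 : g 0 = 1 / (2 * x ^ 2) := by
    have hx0 : x ≠ 0 := by linarith
    simp only [hgdef]
    push_cast
    rw [mul_zero, zero_add, zero_add, neg_sq]
    field_simp
    norm_num
  rw [h0]
  ring
end
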